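/- arXiv:1405.1165 — 2 statements merged into one kernel-verified Lean document; each statement's English description precedes it below -/
import Mathlib

section
/- Let d ≥ 2 and a > 2b > 0, and let y ∈ S₊ with y ≠ arcsin(√(b/a)). Then u_y' vanishes at least once on (0,∞); at the first positive zero r'_y of u_y', the local energy satisfies H(r'_y) < 0. Moreover, the set S₊ is an open subset of (0, π/2). -/
open Real Filter

noncomputable section

/-- The nonlinearity `F(x) = (a/2)·sin(2x)·(sin²x − b/a)`. -/
def Fnl (a b x : ℝ) : ℝ := (a / 2) * Real.sin (2 * x) * (Real.sin x ^ 2 - b / a)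

/-- `u` solves the radial ODE `u'' + ((d−1)/r)u' + F(u) = 0` on `(0,∞)` with `u'(0) = 0`. -/
def IsRadialSol (d : ℕ) (a b : ℝ) (u : ℝ → ℝ) : Prop :=
  ContDiff ℝ 2 u ∧ deriv u 0 = 0 ∧
  ∀ r : ℝ, 0 < r →
    deriv (deriv u) r + (((d : ℝ) - 1) / r) * deriv u r + Fnl a b (u r) = 0

/-- `u` is the family of solutions of the radial ODE with `u y 0 = y`, `(u y)'(0) = 0`. -/
def IsShootingFamily (d : ℕ) (a b : ℝ) (u : ℝ → ℝ → ℝ) : Prop :=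
  ∀ y ∈ Set.Ioo (0 : ℝ) (Real.pi / 2), IsRadialSol d a b (u y) ∧ u y 0 = y

/-- `S₊`: initial data whose solution stays bounded away from zero. -/
def Splus (u : ℝ → ℝ → ℝ) : Set ℝ :=
  {y | y ∈ Set.Ioo (0 : ℝ) (Real.pi / 2) ∧ ∃ ε > (0 : ℝ), ∀ r : ℝ, 0 ≤ r → ε ≤ u y r}

/-- `S₀`: initial data whose solution is positive and tends to zero at infinity. -/
def Szero (u : ℝ → ℝ → ℝ) : Set ℝ :=
  {y | y ∈ Set.Ioo (0 : ℝ) (Real.pi / 2) ∧ (∀ r : ℝ, 0 ≤ r → 0 < u y r) ∧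
    Tendsto (u y) atTop (nhds 0)}

/-- `S₋`: initial data whose solution vanishes at some positive radius. -/
def Sminus (u : ℝ → ℝ → ℝ) : Set ℝ :=
  {y | y ∈ Set.Ioo (0 : ℝ) (Real.pi / 2) ∧ ∃ r > (0 : ℝ), u y r = 0}

/-- The local energy `H(r) = u'(r)²/2 + (a/4)sin⁴(u(r)) − (b/2)sin²(u(r))`. -/
def Hloc (a b : ℝ) (u : ℝ → ℝ) (r : ℝ) : ℝ :=
  deriv u r ^ 2 / 2 + (a / 4) * Real.sin (u r) ^ 4 - (b / 2) * Real.sin (u r) ^ 2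

theorem sol_d1 {d : ℕ} {a b : ℝ} {u : ℝ → ℝ} (h : IsRadialSol d a b u) (r : ℝ) :
    HasDerivAt u (deriv u r) r :=
  (h.1.differentiable (by norm_num) r).hasDerivAt

theorem sol_c1 {d : ℕ} {a b : ℝ} {u : ℝ → ℝ} (h : IsRadialSol d a b u) :
    ContDiff ℝ 1 (deriv u) := by
  have h1 : ContDiff ℝ (1 + 1) u := by
    have := h.1
    norm_num
    exact this
  exact (contDiff_succ_iff_deriv.1 h1).2.2

theorem sol_d2 {d : ℕ} {a b : ℝ} {u : ℝ → ℝ} (h : IsRadialSol d a b u) (r : ℝ) :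
    HasDerivAt (deriv u) (deriv (deriv u) r) r :=
  ((sol_c1 h).differentiable (by norm_num) r).hasDerivAt

theorem Fnl_eq {a : ℝ} (b : ℝ) (ha : 0 < a) (x : ℝ) :
    Fnl a b x = Real.sin x * Real.cos x * (a * Real.sin x ^ 2 - b) := by
  unfold Fnl
  rw [Real.sin_two_mul]
  field_simp

theorem Fnl_hasDeriv (a b x : ℝ) : HasDerivAt (Fnl a b)
    (a * Real.cos (2 * x) * (Real.sin x ^ 2 - b / a)
      + a * Real.sin (2 * x) * (Real.sin x * Real.cos x)) x := by
  unfold Fnl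
  have h1 : HasDerivAt (fun x : ℝ => Real.sin (2 * x)) (Real.cos (2 * x) * 2) x := by
    simpa using ((hasDerivAt_id x).const_mul 2).sin
  have h2 := (h1.const_mul (a / 2)).mul (((Real.hasDerivAt_sin x).pow 2).sub_const (b / a))
  refine h2.congr_deriv ?_
  simp
  ring

theorem Fnl_cont (a b : ℝ) : Continuous (Fnl a b) := by
  unfold Fnl; fun_prop

theorem Fnl_lip {a b : ℝ} (hb : 0 < b) (hab : 2 * b < a) (x z : ℝ) :
    |Fnl a b x - Fnl a b z| ≤ 2 * a * |x - z| := by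
  have ha : 0 < a := by linarith
  have := Convex.norm_image_sub_le_of_norm_hasDerivWithin_le (C := 2 * a) (s := Set.univ)
    (f := Fnl a b) (x := z) (y := x)
    (fun t _ => (Fnl_hasDeriv a b t).hasDerivWithinAt) ?_ convex_univ (Set.mem_univ _)
    (Set.mem_univ _)
  · simpa [Real.norm_eq_abs] using this
  · intro t _
    rw [Real.norm_eq_abs]
    have hba : b / a < 1 := by rw [div_lt_one ha]; linarith
    have hba0 : 0 < b / a := by positivity
    have e1 : |Real.sin t ^ 2 - b / a| ≤ 1 := by
      rw [abs_le]; constructor <;> nlinarith [Real.sin_sq_le_one t, sq_nonneg (Real.sin t)]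
    have e2 : |Real.cos (2 * t)| ≤ 1 := Real.abs_cos_le_one _
    have e3 : |Real.sin (2 * t)| ≤ 1 := Real.abs_sin_le_one _
    have e4 : |Real.sin t * Real.cos t| ≤ 1 := by
      rw [abs_mul]
      exact mul_le_one₀ (Real.abs_sin_le_one _) (abs_nonneg _) (Real.abs_cos_le_one _)
    have e5 : |Real.cos (2 * t) * (Real.sin t ^ 2 - b / a)| ≤ 1 := by
      rw [abs_mul]; exact mul_le_one₀ e2 (abs_nonneg _) e1
    have e6 : |Real.sin (2 * t) * (Real.sin t * Real.cos t)| ≤ 1 := by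
      rw [abs_mul]; exact mul_le_one₀ e3 (abs_nonneg _) e4
    rw [abs_le] at *
    constructor <;> nlinarith

/-- potential -/
def Gpot (a b x : ℝ) : ℝ := (a / 4) * Real.sin x ^ 4 - (b / 2) * Real.sin x ^ 2

theorem Gpot_cont (a b : ℝ) : Continuous (Gpot a b) := by
  unfold Gpot; fun_prop

theorem Hloc_eq (a b : ℝ) (u : ℝ → ℝ) (r : ℝ) :
    Hloc a b u r = deriv u r ^ 2 / 2 + Gpot a b (u r) := by
  unfold Hloc Gpot; ring

theorem Hloc_deriv {d : ℕ} {a b : ℝ} {u : ℝ → ℝ} (ha : 0 < a) (h : IsRadialSol d a b u) (r : ℝ) :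
    HasDerivAt (Hloc a b u) (deriv u r * deriv (deriv u) r + deriv u r * Fnl a b (u r)) r := by
  unfold Hloc
  have hs := (sol_d1 h r).sin
  have := ((((sol_d2 h r).pow 2).div_const 2).add ((hs.pow 4).const_mul (a / 4))).sub
    ((hs.pow 2).const_mul (b / 2))
  refine this.congr_deriv ?_
  rw [Fnl_eq b ha]
  simp
  ring

theorem Hloc_anti {d : ℕ} (hd : 2 ≤ d) {a b : ℝ} {u : ℝ → ℝ} (ha : 0 < a)
    (h : IsRadialSol d a b u) : AntitoneOn (Hloc a b u) (Set.Ici 0) := by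
  refine antitoneOn_of_deriv_nonpos (convex_Ici 0)
    (fun r _ => (Hloc_deriv ha h r).continuousAt.continuousWithinAt)
    (fun r _ => (Hloc_deriv ha h r).differentiableAt.differentiableWithinAt) ?_
  intro r hr
  rw [interior_Ici, Set.mem_Ioi] at hr
  rw [(Hloc_deriv ha h r).deriv]
  have e := h.2.2 r hr
  have hd' : (2 : ℝ) ≤ d := by exact_mod_cast hd
  have : deriv u r * deriv (deriv u) r + deriv u r * Fnl a b (u r)
      = -(((d : ℝ) - 1) / r * deriv u r ^ 2) := by
    linear_combination deriv u r * e
  rw [this]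
  have : 0 ≤ ((d : ℝ) - 1) / r := div_nonneg (by linarith) hr.le
  nlinarith [mul_nonneg this (sq_nonneg (deriv u r))]

theorem Gpot_le {d : ℕ} (hd : 2 ≤ d) {a b y : ℝ} {u : ℝ → ℝ} (ha : 0 < a)
    (h : IsRadialSol d a b u) (hy : u 0 = y) {r : ℝ} (hr : 0 ≤ r) :
    Gpot a b (u r) ≤ Gpot a b y := by
  have h1 := Hloc_anti hd ha h (Set.mem_Ici.2 le_rfl) (Set.mem_Ici.2 hr) hr
  rw [Hloc_eq, Hloc_eq, hy, h.2.1] at h1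
  nlinarith [sq_nonneg (deriv u r)]

theorem cos_ne {a b x y : ℝ} (hb : 0 < b) (hab : 2 * b < a)
    (hy : y ∈ Set.Ioo (0 : ℝ) (Real.pi / 2)) (hx : Gpot a b x ≤ Gpot a b y) :
    Real.cos x ≠ 0 := by
  intro hc
  have h1 : Real.sin x ^ 2 = 1 := by
    have := Real.sin_sq_add_cos_sq x
    rw [hc] at this; linarith
  have hcy : 0 < Real.cos y := Real.cos_pos_of_mem_Ioo ⟨by linarith [hy.1, Real.pi_pos], hy.2⟩
  have h2 := Real.sin_sq_add_cos_sq y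
  unfold Gpot at hx
  have e4 : Real.sin x ^ 4 = 1 := by
    calc Real.sin x ^ 4 = (Real.sin x ^ 2) ^ 2 := by ring
      _ = 1 := by rw [h1]; norm_num
  rw [e4, h1] at hx
  have hs : Real.sin y ^ 2 < 1 := by nlinarith
  have e5 : Real.sin y ^ 4 = (Real.sin y ^ 2) ^ 2 := by ring
  rw [e5] at hx
  have hs0 := sq_nonneg (Real.sin y)
  generalize Real.sin y ^ 2 = s at *
  nlinarith [mul_pos (sub_pos.2 hs) (sub_pos.2 hab), mul_nonneg hs0 (sub_nonneg.2 hs.le)]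

/-- The solution stays below `π/2`. -/
theorem sol_lt {d : ℕ} (hd : 2 ≤ d) {a b y : ℝ} {u : ℝ → ℝ} (hb : 0 < b) (hab : 2 * b < a)
    (h : IsRadialSol d a b u) (h0 : u 0 = y) (hy : y ∈ Set.Ioo (0 : ℝ) (Real.pi / 2))
    {r : ℝ} (hr : 0 ≤ r) : u r < Real.pi / 2 := by
  by_contra! hc
  have hcont : ContinuousOn u (Set.Icc 0 r) := h.1.continuous.continuousOn
  obtain ⟨s, hs, hs'⟩ := intermediate_value_Icc hr hcont ⟨by rw [h0]; exact hy.2.le, hc⟩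
  exact cos_ne hb hab hy (Gpot_le hd (by linarith) h h0 hs.1) (by rw [hs', Real.cos_pi_div_two])

theorem exists_seq {f : ℝ → ℝ} {L : ℝ} (hf : Differentiable ℝ f)
    (hL : Tendsto f atTop (nhds L)) :
    ∃ ξ : ℕ → ℝ, Tendsto ξ atTop atTop ∧ Tendsto (fun n => deriv f (ξ n)) atTop (nhds 0) := by
  have : ∀ n : ℕ, ∃ c ∈ Set.Ioo (n : ℝ) (n + 1), deriv f c = f (n + 1) - f n := by
    intro n
    obtain ⟨c, hc, h⟩ := exists_deriv_eq_slope f (a := (n : ℝ)) (b := n + 1) (by linarith)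
      hf.continuous.continuousOn hf.differentiableOn
    exact ⟨c, hc, by rw [h]; simp⟩
  choose ξ h1 h2 using this
  refine ⟨ξ, tendsto_atTop_mono (fun n => (h1 n).1.le) tendsto_natCast_atTop_atTop, ?_⟩
  simp_rw [h2]
  have e1 : Tendsto (fun n : ℕ => f n) atTop (nhds L) := hL.comp tendsto_natCast_atTop_atTop
  have e2 : Tendsto (fun n : ℕ => f ((n : ℝ) + 1)) atTop (nhds L) :=
    hL.comp (tendsto_atTop_add_const_right _ _ tendsto_natCast_atTop_atTop)
  simpa using e2.sub e1

/-- Oscillation. -/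
theorem oscill {d : ℕ} {a b L : ℝ} {u : ℝ → ℝ} (h : IsRadialSol d a b u)
    (hlim : Tendsto u atTop (nhds L)) (hne : ∀ r, 0 < r → u r ≠ L)
    (hF : Fnl a b L = 0) {c : ℝ} (hc : 0 < c) (hF' : HasDerivAt (Fnl a b) c L) : False := by
  have hs := hasDerivAt_iff_tendsto_slope.1 hF'
  have hu : Tendsto u atTop (nhdsWithin L {L}ᶜ) := by
    refine tendsto_nhdsWithin_iff.2 ⟨hlim, ?_⟩
    filter_upwards [eventually_gt_atTop 0] with r hr using hne r hr
  have hq := (hs.comp hu).eventually (lt_mem_nhds (half_lt_self hc))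
  have hdr : Tendsto (fun r : ℝ => ((d : ℝ) - 1) / r) atTop (nhds 0) :=
    tendsto_const_nhds.div_atTop tendsto_id
  have hdr2 : Tendsto (fun r : ℝ => (((d : ℝ) - 1) / r) ^ 2) atTop (nhds 0) := by
    simpa using hdr.pow 2
  have hd2 := hdr2.eventually (gt_mem_nhds (half_pos hc))
  obtain ⟨R, hR⟩ := eventually_atTop.1 (hq.and (hd2.and (eventually_gt_atTop 0)))
  set κ := min (c / 4) (1 / 2) with hκ
  have hκ0 : 0 < κ := by positivity
  have hder : ∀ r, R ≤ r → HasDerivAt (fun r => Real.arctan (deriv u r / (u r - L)) + κ * r)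
      (1 / (1 + (deriv u r / (u r - L)) ^ 2) *
        ((deriv (deriv u) r * (u r - L) - deriv u r * deriv u r) / (u r - L) ^ 2) + κ * 1) r := by
    intro r hr
    have hw : u r - L ≠ 0 := sub_ne_zero.2 (hne r (hR r hr).2.2)
    exact ((sol_d2 h r).div ((sol_d1 h r).sub_const L) hw).arctan.add
      ((hasDerivAt_id r).const_mul κ)
  have hanti : AntitoneOn (fun r => Real.arctan (deriv u r / (u r - L)) + κ * r) (Set.Ici R) := by
    refine antitoneOn_of_deriv_nonpos (convex_Ici R)
      (fun r hr => (hder r hr).continuousAt.continuousWithinAt)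
      (fun r hr => (hder r (interior_subset hr)).differentiableAt.differentiableWithinAt) ?_
    intro r hr
    have hr := interior_subset hr
    rw [(hder r hr).deriv]
    obtain ⟨q1, q2, q3⟩ := hR r hr
    have hw : u r - L ≠ 0 := sub_ne_zero.2 (hne r q3)
    simp only [Function.comp, slope_def_field, hF, sub_zero] at q1
    have e := h.2.2 r q3
    have e' : (deriv (deriv u) r * (u r - L) - deriv u r * deriv u r) / (u r - L) ^ 2 =
        -(Fnl a b (u r) / (u r - L)) - ((d : ℝ) - 1) / r * (deriv u r / (u r - L))
          - (deriv u r / (u r - L)) ^ 2 := by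
      have : deriv (deriv u) r = - (((d : ℝ) - 1) / r * deriv u r) - Fnl a b (u r) := by
        linarith
      rw [this]
      field_simp
      ring
    rw [e']
    generalize Fnl a b (u r) / (u r - L) = q at *
    generalize deriv u r / (u r - L) = p at *
    generalize ((d : ℝ) - 1) / r = δ at *
    have hp : 0 < 1 + p ^ 2 := by positivity
    have k1 : κ ≤ c / 4 := min_le_left _ _
    have k2 : κ ≤ 1 / 2 := min_le_right _ _
    have : -q - δ * p - p ^ 2 ≤ -κ * (1 + p ^ 2) := by
      nlinarith [sq_nonneg (δ + p), mul_le_mul_of_nonneg_right k2 (sq_nonneg p)]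
    have h3 : 1 / (1 + p ^ 2) * (-q - δ * p - p ^ 2) ≤ -κ := by
      rw [one_div, inv_mul_le_iff₀ hp]; linarith
    linarith
  have hT : R ≤ R + Real.pi / κ := by
    have := Real.pi_pos
    have : 0 ≤ Real.pi / κ := by positivity
    linarith
  have := hanti (Set.mem_Ici.2 le_rfl) (Set.mem_Ici.2 hT) hT
  simp only at this
  rw [mul_add, mul_div_cancel₀ _ hκ0.ne'] at this
  have a1 := Real.neg_pi_div_two_lt_arctan (deriv u (R + Real.pi / κ) / (u (R + Real.pi / κ) - L))
  have a2 := Real.arctan_lt_pi_div_two (deriv u R / (u R - L))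
  linarith

theorem part1 {d : ℕ} (hd : 2 ≤ d) {a b y ε : ℝ} {u : ℝ → ℝ} (hb : 0 < b) (hab : 2 * b < a)
    (h : IsRadialSol d a b u) (h0 : u 0 = y) (hy : y ∈ Set.Ioo (0 : ℝ) (Real.pi / 2))
    (hε : 0 < ε) (hu : ∀ r, 0 ≤ r → ε ≤ u r) : ∃ r > (0 : ℝ), deriv u r = 0 := by
  by_contra! hne
  have ha : 0 < a := by linarith
  have hlt : ∀ r, 0 ≤ r → u r < Real.pi / 2 := fun r hr => sol_lt hd hb hab h h0 hy hr
  -- limit exists and is never attained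
  have key : ∃ L, Tendsto u atTop (nhds L) ∧ ∀ r, 0 < r → u r ≠ L := by
    have hsign := hasDerivWithinAt_forall_lt_or_forall_gt_of_forall_ne (convex_Ioi (0 : ℝ))
      (fun x _ => (sol_d1 h x).hasDerivWithinAt) (m := 0) (fun x hx => hne x hx)
    rcases hsign with hs | hs
    · have hmono : StrictAntiOn u (Set.Ici 0) :=
        strictAntiOn_of_deriv_neg (convex_Ici 0) h.1.continuous.continuousOn
          (by rw [interior_Ici]; exact hs)
      have hA : Antitone (fun r => u (max r 0)) := fun r s hrs =>
        hmono.antitoneOn (Set.mem_Ici.2 (le_max_right _ _)) (Set.mem_Ici.2 (le_max_right _ _))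
          (max_le_max_right _ hrs)
      have hB : BddBelow (Set.range (fun r => u (max r 0))) :=
        ⟨ε, by rintro _ ⟨r, rfl⟩; exact hu _ (le_max_right _ _)⟩
      refine ⟨_, (tendsto_atTop_ciInf hA hB).congr' ?_, ?_⟩
      · filter_upwards [eventually_ge_atTop 0] with r hr
        simp [hr]
      · intro r hr he
        have h1 := ciInf_le hB (r + 1)
        rw [← he, max_eq_left (by linarith)] at h1
        exact absurd (hmono (Set.mem_Ici.2 hr.le) (Set.mem_Ici.2 (by linarith : 0 ≤ r + 1))
          (by linarith)) (not_lt.2 h1)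
    · have hmono : StrictMonoOn u (Set.Ici 0) :=
        strictMonoOn_of_deriv_pos (convex_Ici 0) h.1.continuous.continuousOn
          (by rw [interior_Ici]; exact hs)
      have hA : Monotone (fun r => u (max r 0)) := fun r s hrs =>
        hmono.monotoneOn (Set.mem_Ici.2 (le_max_right _ _)) (Set.mem_Ici.2 (le_max_right _ _))
          (max_le_max_right _ hrs)
      have hB : BddAbove (Set.range (fun r => u (max r 0))) :=
        ⟨Real.pi / 2, by rintro _ ⟨r, rfl⟩; exact (hlt _ (le_max_right _ _)).le⟩
      refine ⟨_, (tendsto_atTop_ciSup hA hB).congr' ?_, ?_⟩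
      · filter_upwards [eventually_ge_atTop 0] with r hr
        simp [hr]
      · intro r hr he
        have h1 := le_ciSup hB (r + 1)
        rw [← he, max_eq_left (by linarith)] at h1
        exact absurd (hmono (Set.mem_Ici.2 hr.le) (Set.mem_Ici.2 (by linarith : 0 ≤ r + 1))
          (by linarith)) (not_lt.2 h1)
  obtain ⟨L, hL, hLne⟩ := key
  have hLε : ε ≤ L := ge_of_tendsto hL (by
    filter_upwards [eventually_ge_atTop 0] with r hr using hu r hr)
  have hLpi : L ≤ Real.pi / 2 := le_of_tendsto hL (by
    filter_upwards [eventually_ge_atTop 0] with r hr using (hlt r hr).le)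
  have hGL : Tendsto (fun r => Gpot a b (u r)) atTop (nhds (Gpot a b L)) :=
    ((Gpot_cont a b).tendsto L).comp hL
  have hcos : Real.cos L ≠ 0 := by
    refine cos_ne hb hab hy (le_of_tendsto hGL ?_)
    filter_upwards [eventually_ge_atTop 0] with r hr using Gpot_le hd ha h h0 hr
  have hsin : 0 < Real.sin L := Real.sin_pos_of_pos_of_lt_pi (by linarith)
    (by linarith [Real.pi_pos])
  -- H converges
  have hH : ∃ m, Tendsto (Hloc a b u) atTop (nhds m) := by
    have hA : Antitone (fun r => Hloc a b u (max r 0)) := fun r s hrs =>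
        Hloc_anti hd ha h (Set.mem_Ici.2 (le_max_right _ _)) (Set.mem_Ici.2 (le_max_right _ _))
          (max_le_max_right _ hrs)
    have hB : BddBelow (Set.range (fun r => Hloc a b u (max r 0))) := by
      refine ⟨-(b / 2), ?_⟩
      rintro _ ⟨r, rfl⟩
      simp only [Hloc]
      have t1 := Real.sin_sq_le_one (u (max r 0))
      have t2 : 0 ≤ Real.sin (u (max r 0)) ^ 4 := by positivity
      have t3 := sq_nonneg (deriv u (max r 0))
      nlinarith [mul_nonneg ha.le t2]
    refine ⟨_, (tendsto_atTop_ciInf hA hB).congr' ?_⟩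
    filter_upwards [eventually_ge_atTop 0] with r hr
    simp [hr]
  obtain ⟨m, hm⟩ := hH
  have hsq : Tendsto (fun r => deriv u r ^ 2) atTop (nhds (2 * (m - Gpot a b L))) := by
    refine ((hm.sub hGL).const_mul 2).congr ?_
    intro r; rw [Hloc_eq]; ring
  obtain ⟨ξ, hξ, hξ'⟩ := exists_seq (h.1.differentiable (by norm_num)) hL
  have hz : 2 * (m - Gpot a b L) = 0 :=
    tendsto_nhds_unique (hsq.comp hξ) (by simpa [Function.comp_def] using hξ'.pow 2)
  rw [hz] at hsq
  have hu' : Tendsto (deriv u) atTop (nhds 0) := by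
    have := (Real.continuous_sqrt.tendsto 0).comp hsq
    rw [Real.sqrt_zero] at this
    rw [tendsto_zero_iff_abs_tendsto_zero]
    refine this.congr ?_
    intro r; simp [Real.sqrt_sq_eq_abs]
  have hdr : Tendsto (fun r : ℝ => ((d : ℝ) - 1) / r) atTop (nhds 0) :=
    tendsto_const_nhds.div_atTop tendsto_id
  have hu'' : Tendsto (deriv (deriv u)) atTop (nhds (-(Fnl a b L))) := by
    have h1 : Tendsto (fun r => -(((d : ℝ) - 1) / r * deriv u r) - Fnl a b (u r)) atTop
        (nhds (-(0 * 0) - Fnl a b L)) :=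
      (hdr.mul hu').neg.sub (((Fnl_cont a b).tendsto L).comp hL)
    rw [mul_zero, neg_zero, zero_sub] at h1
    refine h1.congr' ?_
    filter_upwards [eventually_gt_atTop 0] with r hr
    have := h.2.2 r hr
    linarith
  obtain ⟨η, hη, hη'⟩ := exists_seq ((sol_c1 h).differentiable (by norm_num)) hu'
  have hF : Fnl a b L = 0 := by
    have := tendsto_nhds_unique (hu''.comp hη) hη'
    linarith
  have hs2 : Real.sin L ^ 2 - b / a = 0 := by
    have h1 := hF
    unfold Fnl at h1
    rw [Real.sin_two_mul] at h1
    have : a / 2 * (2 * Real.sin L * Real.cos L) ≠ 0 :=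
      mul_ne_zero (by positivity) (mul_ne_zero (by positivity) hcos)
    exact (mul_eq_zero.1 h1).resolve_left this
  refine oscill h hL hLne hF ?_ (Fnl_hasDeriv a b L)
  rw [hs2, mul_zero, zero_add, Real.sin_two_mul]
  have : a * (2 * Real.sin L * Real.cos L) * (Real.sin L * Real.cos L)
    = 2 * a * (Real.sin L * Real.cos L) ^ 2 := by ring
  rw [this]
  have : Real.sin L * Real.cos L ≠ 0 := mul_ne_zero hsin.ne' hcos
  positivity

theorem Fnl_pos {a b x : ℝ} (ha : 0 < a) (h0 : 0 < x) (h1 : x < Real.pi / 2)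
    (h : b < a * Real.sin x ^ 2) : 0 < Fnl a b x := by
  rw [Fnl_eq b ha]
  have := Real.sin_pos_of_pos_of_lt_pi h0 (by linarith)
  have := Real.cos_pos_of_mem_Ioo (x := x) ⟨by linarith, h1⟩
  have : 0 < a * Real.sin x ^ 2 - b := by linarith
  positivity

/-- `F(u) > 0` on `(0, r)` forces `u'(r) < 0`. -/
theorem neg_of_F_pos {d : ℕ} (hd : 2 ≤ d) {a b : ℝ} {u : ℝ → ℝ} (h : IsRadialSol d a b u)
    {r : ℝ} (hr : 0 < r) (hF : ∀ s ∈ Set.Ioo 0 r, 0 < Fnl a b (u s)) : deriv u r < 0 := by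
  have hder : ∀ s, HasDerivAt (fun s => s ^ (d - 1) * deriv u s)
      (((d - 1 : ℕ) : ℝ) * s ^ (d - 1 - 1) * deriv u s + s ^ (d - 1) * deriv (deriv u) s) s := by
    intro s
    exact (hasDerivAt_pow (d - 1) s).mul (sol_d2 h s)
  have hanti : StrictAntiOn (fun s => s ^ (d - 1) * deriv u s) (Set.Icc 0 r) := by
    refine strictAntiOn_of_deriv_neg (convex_Icc 0 r)
      (fun s _ => (hder s).continuousAt.continuousWithinAt) ?_
    intro s hs
    rw [interior_Icc] at hs
    rw [(hder s).deriv]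
    obtain ⟨k, rfl⟩ : ∃ k, d = k + 2 := ⟨d - 2, by omega⟩
    have e := h.2.2 s hs.1
    have hs0 := hs.1
    have e2 : deriv (deriv u) s = -(((k + 2 : ℕ) : ℝ) - 1) / s * deriv u s - Fnl a b (u s) := by
      linear_combination e
    have : (((k + 2 - 1 : ℕ) : ℝ) * s ^ (k + 2 - 1 - 1) * deriv u s
        + s ^ (k + 2 - 1) * deriv (deriv u) s) = - (s ^ (k + 1) * Fnl a b (u s)) := by
      rw [e2]
      have i1 : k + 2 - 1 = k + 1 := by omega
      have i2 : k + 2 - 1 - 1 = k := by omega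
      rw [i2, i1]
      push_cast
      field_simp
      ring
    rw [this]
    have := hF s hs
    have : 0 < s ^ (k + 1) * Fnl a b (u s) := by positivity
    linarith
  have := hanti (Set.left_mem_Icc.2 hr.le) (Set.right_mem_Icc.2 hr.le) hr
  simp only [h.2.1, mul_zero] at this
  have hp : 0 < r ^ (d - 1) := by positivity
  by_contra! hc
  nlinarith [mul_nonneg hp.le hc]

theorem big_of_G {a b x : ℝ} (hb : 0 < b) (ha : 0 < a) (h0 : 0 < x) (h1 : x < Real.pi / 2)
    (h : 0 ≤ Gpot a b x) : b < a * Real.sin x ^ 2 := by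
  unfold Gpot at h
  have hs := Real.sin_pos_of_pos_of_lt_pi h0 (by linarith)
  have h2 : 0 < Real.sin x ^ 2 := by positivity
  have e : a / 4 * Real.sin x ^ 4 - b / 2 * Real.sin x ^ 2
    = Real.sin x ^ 2 * ((a * Real.sin x ^ 2 - 2 * b) / 4) := by ring
  rw [e] at h
  have := nonneg_of_mul_nonneg_right h h2
  linarith

theorem part2 {d : ℕ} (hd : 2 ≤ d) {a b y ε : ℝ} {u : ℝ → ℝ} (hb : 0 < b) (hab : 2 * b < a)
    (h : IsRadialSol d a b u) (h0 : u 0 = y) (hy : y ∈ Set.Ioo (0 : ℝ) (Real.pi / 2))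
    (hε : 0 < ε) (hu : ∀ r, 0 ≤ r → ε ≤ u r) {r : ℝ} (hr : 0 < r) (hr' : deriv u r = 0)
    (hne : ∀ s, 0 < s → s < r → deriv u s ≠ 0) : Hloc a b u r < 0 := by
  have ha : 0 < a := by linarith
  by_contra! hc
  have hG : 0 ≤ Gpot a b (u r) := by
    rw [Hloc_eq, hr'] at hc; simpa using hc
  have hGy : 0 ≤ Gpot a b y := hG.trans (Gpot_le hd ha h h0 hr.le)
  have b1 := big_of_G hb ha (by linarith [hu r hr.le]) (sol_lt hd hb hab h h0 hy hr.le) hG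
  have b2 := big_of_G hb ha hy.1 hy.2 hGy
  have hmin : ∀ s ∈ Set.Ioo 0 r, u r ≤ u s ∨ y ≤ u s := by
    have hsign := hasDerivWithinAt_forall_lt_or_forall_gt_of_forall_ne (convex_Ioo (0 : ℝ) r)
      (fun x _ => (sol_d1 h x).hasDerivWithinAt) (m := 0) (fun x hx => hne x hx.1 hx.2)
    intro s hs
    rcases hsign with hs' | hs'
    · have hmono : StrictAntiOn u (Set.Icc 0 r) :=
        strictAntiOn_of_deriv_neg (convex_Icc 0 r) h.1.continuous.continuousOn
          (by rw [interior_Icc]; exact hs')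
      exact Or.inl (hmono ⟨hs.1.le, hs.2.le⟩ ⟨hr.le, le_rfl⟩ hs.2).le
    · have hmono : StrictMonoOn u (Set.Icc 0 r) :=
        strictMonoOn_of_deriv_pos (convex_Icc 0 r) h.1.continuous.continuousOn
          (by rw [interior_Icc]; exact hs')
      right
      rw [← h0]
      exact (hmono ⟨le_rfl, hr.le⟩ ⟨hs.1.le, hs.2.le⟩ hs.1).le
  have hsinmono : ∀ x z, 0 < x → x ≤ z → z < Real.pi / 2 → b < a * Real.sin x ^ 2 →
      b < a * Real.sin z ^ 2 := by
    intro x z hx hxz hz hbx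
    have s1 := Real.sin_pos_of_pos_of_lt_pi hx (by linarith)
    have s2 := Real.sin_le_sin_of_le_of_le_pi_div_two (by linarith) hz.le hxz
    have : Real.sin x ^ 2 ≤ Real.sin z ^ 2 := by gcongr
    nlinarith
  refine absurd hr' (neg_of_F_pos hd h hr ?_).ne
  intro s hs
  have l1 := hu s hs.1.le
  have l2 := sol_lt hd hb hab h h0 hy hs.1.le
  refine Fnl_pos ha (by linarith) l2 ?_
  rcases hmin s hs with h' | h'
  · exact hsinmono _ _ (by linarith [hu r hr.le]) h' l2 b1
  · exact hsinmono _ _ hy.1 h' l2 b2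

/-- Some point with negative energy. -/
theorem exists_neg {d : ℕ} (hd : 2 ≤ d) {a b y ε : ℝ} {u : ℝ → ℝ} (hb : 0 < b) (hab : 2 * b < a)
    (h : IsRadialSol d a b u) (h0 : u 0 = y) (hy : y ∈ Set.Ioo (0 : ℝ) (Real.pi / 2))
    (hε : 0 < ε) (hu : ∀ r, 0 ≤ r → ε ≤ u r) : ∃ r, 0 ≤ r ∧ Hloc a b u r < 0 := by
  have ha : 0 < a := by linarith
  by_cases hG : Gpot a b y < 0
  · refine ⟨0, le_rfl, ?_⟩
    rw [Hloc_eq, h.2.1, h0]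
    simpa using hG
  push Not at hG
  have hF0 : 0 < Fnl a b (u 0) := by
    rw [h0]; exact Fnl_pos ha hy.1 hy.2 (big_of_G hb ha hy.1 hy.2 hG)
  have hev : ∀ᶠ s in nhds (0 : ℝ), 0 < Fnl a b (u s) :=
    ((Fnl_cont a b).comp h.1.continuous).continuousAt.eventually (lt_mem_nhds hF0)
  obtain ⟨δ, hδ, hδ'⟩ := Metric.eventually_nhds_iff.1 hev
  have hneg : ∀ s, 0 < s → s < δ → deriv u s < 0 := by
    intro s hs hsδ
    refine neg_of_F_pos hd h hs (fun t ht => hδ' ?_)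
    rw [Real.dist_eq, sub_zero, abs_of_pos ht.1]
    linarith [ht.2]
  obtain ⟨r1, hr1, hr1'⟩ := part1 hd hb hab h h0 hy hε hu
  set Z : Set ℝ := Set.Ici δ ∩ {s | deriv u s = 0} with hZ
  have hZc : IsClosed Z := isClosed_Ici.inter
    (isClosed_eq (sol_c1 h).continuous continuous_const)
  have hmem : ∀ s, 0 < s → deriv u s = 0 → s ∈ Z := by
    intro s hs hs'
    refine ⟨?_, hs'⟩
    by_contra hc
    exact absurd hs' (hneg s hs (not_le.1 hc)).ne
  have hB : BddBelow Z := ⟨δ, fun s hs => hs.1⟩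
  have hm := hZc.csInf_mem ⟨r1, hmem r1 hr1 hr1'⟩ hB
  have hpos : 0 < sInf Z := lt_of_lt_of_le hδ hm.1
  refine ⟨sInf Z, hpos.le, part2 hd hb hab h h0 hy hε hu hpos hm.2 ?_⟩
  intro s hs hs1 hs2
  exact absurd (csInf_le hB (hmem s hs hs2)) (not_le.2 hs1)

/-- Continuous dependence. -/
theorem contdep {d : ℕ} (hd : 2 ≤ d) {a b : ℝ} {u v : ℝ → ℝ} (hb : 0 < b) (hab : 2 * b < a)
    (hu : IsRadialSol d a b u) (hv : IsRadialSol d a b v) {r : ℝ} (hr : 0 ≤ r) :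
    (u r - v r) ^ 2 + (deriv u r - deriv v r) ^ 2
      ≤ (u 0 - v 0) ^ 2 * Real.exp ((2 * a + 1) * r) := by
  have ha : 0 < a := by linarith
  set K := 2 * a + 1 with hK
  have hder : ∀ s, HasDerivAt
      (fun s => ((u s - v s) ^ 2 + (deriv u s - deriv v s) ^ 2) * Real.exp (-(K * s)))
      ((2 * (u s - v s) * (deriv u s - deriv v s) +
        2 * (deriv u s - deriv v s) * (deriv (deriv u) s - deriv (deriv v) s)) * Real.exp (-(K * s))
        + ((u s - v s) ^ 2 + (deriv u s - deriv v s) ^ 2) * (Real.exp (-(K * s)) * (-K))) s := by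
    intro s
    have e1 := ((sol_d1 hu s).sub (sol_d1 hv s)).pow 2
    have e2 := ((sol_d2 hu s).sub (sol_d2 hv s)).pow 2
    have e3 := (((hasDerivAt_id s).const_mul K).neg).exp
    refine ((e1.add e2).mul e3).congr_deriv ?_
    simp
  have hanti : AntitoneOn
      (fun s => ((u s - v s) ^ 2 + (deriv u s - deriv v s) ^ 2) * Real.exp (-(K * s)))
      (Set.Ici 0) := by
    refine antitoneOn_of_deriv_nonpos (convex_Ici 0)
      (fun r _ => (hder r).continuousAt.continuousWithinAt)
      (fun r _ => (hder r).differentiableAt.differentiableWithinAt) ?_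
    intro s hs
    rw [interior_Ici, Set.mem_Ioi] at hs
    rw [(hder s).deriv]
    have eu := hu.2.2 s hs
    have ev := hv.2.2 s hs
    have hL := Fnl_lip hb hab (u s) (v s)
    have hd' : (2 : ℝ) ≤ d := by exact_mod_cast hd
    have hδ : 0 ≤ ((d : ℝ) - 1) / s := div_nonneg (by linarith) hs.le
    have e : deriv (deriv u) s - deriv (deriv v) s
        = -(((d : ℝ) - 1) / s * (deriv u s - deriv v s)) - (Fnl a b (u s) - Fnl a b (v s)) := by
      linear_combination eu - ev
    rw [e]
    have hE := Real.exp_pos (-(K * s))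
    generalize Fnl a b (u s) - Fnl a b (v s) = f at *
    generalize deriv u s - deriv v s = p at *
    generalize u s - v s = w at *
    generalize ((d : ℝ) - 1) / s = δ at *
    generalize Real.exp (-(K * s)) = E at *
    have h1 : -(p * f) ≤ |p| * (2 * a * |w|) := by
      calc -(p * f) ≤ |p * f| := neg_le_abs _
        _ = |p| * |f| := abs_mul _ _
        _ ≤ _ := by gcongr
    have h2 : w * p ≤ |p| * |w| := by
      rw [← abs_mul, mul_comm p w]; exact le_abs_self _
    have h3 : 2 * (|p| * |w|) ≤ p ^ 2 + w ^ 2 := by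
      nlinarith [sq_nonneg (|p| - |w|), sq_abs p, sq_abs w]
    have h4 : 0 ≤ δ * p ^ 2 := by positivity
    have : 2 * w * p + 2 * p * (-(δ * p) - f) - (w ^ 2 + p ^ 2) * K ≤ 0 := by
      rw [hK]
      nlinarith [mul_le_mul_of_nonneg_left h3 ha.le]
    calc _ = (2 * w * p + 2 * p * (-(δ * p) - f) - (w ^ 2 + p ^ 2) * K) * E := by ring
      _ ≤ 0 := mul_nonpos_of_nonpos_of_nonneg this hE.le
  have := hanti (Set.mem_Ici.2 le_rfl) (Set.mem_Ici.2 hr) hr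
  simp only [hu.2.1, hv.2.1] at this
  rw [Real.exp_neg, ← div_eq_mul_inv, div_le_iff₀ (Real.exp_pos _)] at this
  simpa using this

/-- Negative energy traps the solution. -/
theorem trap {d : ℕ} (hd : 2 ≤ d) {a b : ℝ} {u : ℝ → ℝ} (hb : 0 < b) (hab : 2 * b < a)
    (h : IsRadialSol d a b u) {r0 : ℝ} (hr0 : 0 ≤ r0) (hpos : 0 < u r0)
    (hH : Hloc a b u r0 < 0) : ∃ ε > (0 : ℝ), ∀ r, r0 ≤ r → ε ≤ u r := by
  have ha : 0 < a := by linarith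
  set η := -Hloc a b u r0 with hη
  have hη0 : 0 < η := by linarith
  have hs : ∀ r, r0 ≤ r → 2 * η / b ≤ Real.sin (u r) ^ 2 := by
    intro r hr
    have h1 := Hloc_anti hd ha h (Set.mem_Ici.2 hr0) (Set.mem_Ici.2 (hr0.trans hr)) hr
    rw [Hloc_eq] at h1
    unfold Gpot at h1
    rw [div_le_iff₀ hb]
    have : 0 ≤ a / 4 * Real.sin (u r) ^ 4 := by positivity
    nlinarith [sq_nonneg (deriv u r)]
  have hq : 0 < 2 * η / b := by positivity
  have hup : ∀ r, r0 ≤ r → 0 < u r := by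
    intro r hr
    by_contra! hc
    obtain ⟨s, hs', hs''⟩ := intermediate_value_Icc' hr h.1.continuous.continuousOn
      (show (0 : ℝ) ∈ Set.Icc (u r) (u r0) from ⟨hc, hpos.le⟩)
    have := hs s hs'.1
    rw [hs''] at this
    simp at this
    linarith
  refine ⟨Real.sqrt (2 * η / b), Real.sqrt_pos.2 hq, fun r hr => ?_⟩
  refine Real.sqrt_le_iff.2 ⟨(hup r hr).le, (hs r hr).trans ?_⟩
  exact Real.sin_sq_le_sq

theorem part3 {d : ℕ} (hd : 2 ≤ d) {a b : ℝ} (hb : 0 < b) (hab : 2 * b < a)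
    (u : ℝ → ℝ → ℝ) (hfam : IsShootingFamily d a b u) : IsOpen (Splus u) := by
  rw [isOpen_iff_mem_nhds]
  rintro y ⟨hy, ε, hε, hu⟩
  obtain ⟨hsol, h0⟩ := hfam y hy
  obtain ⟨r, hr, hH⟩ := exists_neg hd hb hab hsol h0 hy hε hu
  have hI : ∀ᶠ z in nhds y, z ∈ Set.Ioo (0 : ℝ) (Real.pi / 2) := isOpen_Ioo.mem_nhds hy
  set C := Real.exp ((2 * a + 1) * r) with hC
  have hdep : ∀ᶠ z in nhds y, ∀ s, 0 ≤ s → s ≤ r →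
      (u z s - u y s) ^ 2 + (deriv (u z) s - deriv (u y) s) ^ 2 ≤ (z - y) ^ 2 * C := by
    filter_upwards [hI] with z hz s hs hsr
    obtain ⟨hz1, hz2⟩ := hfam z hz
    have := contdep hd hb hab hz1 hsol hs
    rw [hz2, h0] at this
    refine this.trans ?_
    rw [hC]
    have ha : 0 < a := by linarith
    gcongr
  have hsm : Tendsto (fun z => (z - y) ^ 2 * C) (nhds y) (nhds 0) := by
    have : Continuous (fun z => (z - y) ^ 2 * C) := by fun_prop
    simpa using this.tendsto y
  have hsq : Tendsto (fun z => Real.sqrt ((z - y) ^ 2 * C)) (nhds y) (nhds 0) := by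
    simpa [Function.comp_def] using (Real.continuous_sqrt.tendsto 0).comp hsm
  have t1 : Tendsto (fun z => u z r) (nhds y) (nhds (u y r)) := by
    rw [tendsto_iff_dist_tendsto_zero]
    refine squeeze_zero' (Eventually.of_forall fun _ => dist_nonneg) ?_ hsq
    filter_upwards [hdep] with z hz
    rw [Real.dist_eq]
    refine Real.abs_le_sqrt ?_
    nlinarith [hz r hr le_rfl, sq_nonneg (deriv (u z) r - deriv (u y) r)]
  have t2 : Tendsto (fun z => deriv (u z) r) (nhds y) (nhds (deriv (u y) r)) := by
    rw [tendsto_iff_dist_tendsto_zero]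
    refine squeeze_zero' (Eventually.of_forall fun _ => dist_nonneg) ?_ hsq
    filter_upwards [hdep] with z hz
    rw [Real.dist_eq]
    refine Real.abs_le_sqrt ?_
    nlinarith [hz r hr le_rfl, sq_nonneg (u z r - u y r)]
  have t3 : Tendsto (fun z => Hloc a b (u z) r) (nhds y) (nhds (Hloc a b (u y) r)) := by
    simp only [Hloc_eq]
    exact ((t2.pow 2).div_const 2).add (((Gpot_cont a b).tendsto _).comp t1)
  filter_upwards [hI, hdep, t3.eventually (gt_mem_nhds hH),
    hsq.eventually (gt_mem_nhds (half_pos hε))] with z hz hz2 hz3 hz4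
  have hbd : ∀ s, 0 ≤ s → s ≤ r → ε / 2 ≤ u z s := by
    intro s hs hsr
    have h1 : |u z s - u y s| ≤ Real.sqrt ((z - y) ^ 2 * C) := by
      refine Real.abs_le_sqrt ?_
      nlinarith [hz2 s hs hsr, sq_nonneg (deriv (u z) s - deriv (u y) s)]
    have h2 := hu s hs
    have h3 := (abs_le.1 h1).1
    linarith
  obtain ⟨ε', hε', h5⟩ := trap hd hb hab (hfam z hz).1 hr
    (lt_of_lt_of_le (half_pos hε) (hbd r hr le_rfl)) hz3
  refine ⟨hz, min (ε / 2) ε', lt_min (half_pos hε) hε', fun s hs => ?_⟩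
  rcases le_total s r with hsr | hsr
  · exact (min_le_left _ _).trans (hbd s hs hsr)
  · exact (min_le_right _ _).trans (h5 s hsr)

theorem Splus_properties (d : ℕ) (hd : 2 ≤ d) (a b : ℝ)
    (hb : 0 < b) (hab : 2 * b < a)
    (u : ℝ → ℝ → ℝ) (hfam : IsShootingFamily d a b u)
    (y : ℝ) (hy : y ∈ Splus u) (hy' : y ≠ Real.arcsin (Real.sqrt (b / a))) :
    (∃ r > (0 : ℝ), deriv (u y) r = 0) ∧
    (∀ r' : ℝ, 0 < r' → deriv (u y) r' = 0 →
      (∀ s : ℝ, 0 < s → s < r' → deriv (u y) s ≠ 0) →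
      Hloc a b (u y) r' < 0) ∧
    IsOpen (Splus u) := by
  obtain ⟨hyI, ε, hε, hu⟩ := hy
  obtain ⟨hsol, h0⟩ := hfam y hyI
  exact ⟨part1 hd hb hab hsol h0 hyI hε hu,
    fun r' hr h1 h2 => part2 hd hb hab hsol h0 hyI hε hu hr h1 h2,
    part3 hd hb hab u hfam⟩
end
end

section
/- Let d ≥ 2 and a > 2b > 0, and let y ∈ S₀. Then the solution v_y of the linearized equation vanishes exactly once on (0, ∞). -/
open Real Filter

noncomputable section

/-- `v` solves the linearized equation `v'' + ((d−1)/r)v' + F'(w)v = 0`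
with `v(0) = 1`, `v'(0) = 0`. -/
def IsLinearizedSol (d : ℕ) (a b : ℝ) (w v : ℝ → ℝ) : Prop :=
  ContDiff ℝ 2 v ∧ v 0 = 1 ∧ deriv v 0 = 0 ∧
  ∀ r : ℝ, 0 < r →
    deriv (deriv v) r + (((d : ℝ) - 1) / r) * deriv v r
      + deriv (Fnl a b) (w r) * v r = 0


def ff (a b x : ℝ) : ℝ := sin x * cos x * (a * sin x ^ 2 - b)
def df (a b x : ℝ) : ℝ := (cos x ^ 2 - sin x ^ 2) * (a * sin x ^ 2 - b) + 2 * a * sin x ^ 2 * cos x ^ 2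
def hh (a b x : ℝ) : ℝ := a / 4 * sin x ^ 4 - b / 2 * sin x ^ 2

lemma ff_der (a b x : ℝ) : HasDerivAt (ff a b) (df a b x) x := by
  unfold ff df
  have h1 := Real.hasDerivAt_sin x
  have h2 := Real.hasDerivAt_cos x
  refine ((h1.mul h2).mul (((h1.pow 2).const_mul a).sub_const b)).congr_deriv ?_
  simp
  ring

lemma hh_der (a b x : ℝ) : HasDerivAt (hh a b) (ff a b x) x := by
  unfold ff hh
  have h1 := Real.hasDerivAt_sin x
  refine (((h1.pow 4).const_mul (a/4)).sub ((h1.pow 2).const_mul (b/2))).congr_deriv ?_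
  simp
  ring

def CC (z : ℝ) : ℝ := z * cos z / sin z

lemma CC_anti : StrictAntiOn CC (Set.Ioo 0 π) := by
  have hd : ∀ z ∈ Set.Ioo 0 π, HasDerivAt CC ((sin z * cos z - z) / sin z ^ 2) z := by
    intro z hz
    have hs := Real.sin_pos_of_pos_of_lt_pi hz.1 hz.2
    unfold CC
    refine (((hasDerivAt_id z).mul (Real.hasDerivAt_cos z)).div (Real.hasDerivAt_sin z) hs.ne').congr_deriv ?_
    simp
    congr 1
    linear_combination (-z) * (Real.sin_sq_add_cos_sq z)
  apply strictAntiOn_of_deriv_neg (convex_Ioo _ _)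
  · intro z hz
    exact (hd z hz).continuousAt.continuousWithinAt
  · intro z hz
    rw [interior_Ioo] at hz
    rw [(hd z hz).deriv]
    have hs := Real.sin_pos_of_pos_of_lt_pi hz.1 hz.2
    apply div_neg_of_neg_of_pos _ (by positivity)
    have := Real.sin_lt (x := 2 * z) (by linarith [hz.1])
    rw [Real.sin_two_mul] at this
    linarith

lemma CC_pos {x : ℝ} (h0 : 0 < x) (h1 : x < π / 2) : 0 < CC x := by
  have := Real.sin_pos_of_pos_of_lt_pi h0 (by linarith)
  have := Real.cos_pos_of_mem_Ioo (x := x) ⟨by linarith, h1⟩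
  unfold CC; positivity

lemma sin_gt {z : ℝ} (h0 : 0 < z) (h1 : z < π) : z * cos z < sin z := by
  have hs := Real.sin_pos_of_pos_of_lt_pi h0 h1
  rcases lt_or_ge z (π / 2) with h | h
  · have hc := Real.cos_pos_of_mem_Ioo (x := z) ⟨by linarith, h⟩
    have := Real.lt_tan h0 h
    rw [Real.tan_eq_sin_div_cos, lt_div_iff₀ hc] at this
    exact this
  · have : cos z ≤ 0 := Real.cos_nonpos_of_pi_div_two_le_of_le h (by linarith)
    nlinarith

/-- `x f' > f` where `f ≤ 0`. -/
lemma I1_pos {a b x : ℝ} (ha : 0 < a) (h0 : 0 < x) (h1 : x < π / 2) (hf : a * sin x ^ 2 - b ≤ 0) :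
    0 < x * df a b x - ff a b x := by
  have hs := Real.sin_pos_of_pos_of_lt_pi h0 (by linarith)
  have hc := Real.cos_pos_of_mem_Ioo (x := x) ⟨by linarith, h1⟩
  have h := sin_gt (z := 2 * x) (by linarith) (by linarith)
  rw [Real.sin_two_mul, Real.cos_two_mul'] at h
  have e : x * df a b x - ff a b x = (b - a * sin x ^ 2) * (sin x * cos x - x * (cos x ^ 2 - sin x ^ 2))
      + 2 * a * x * sin x ^ 2 * cos x ^ 2 := by unfold df ff; ring
  rw [e]
  have : 0 ≤ (b - a * sin x ^ 2) * (sin x * cos x - x * (cos x ^ 2 - sin x ^ 2)) :=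
    mul_nonneg (by linarith) (by linarith)
  have : 0 < 2 * a * x * sin x ^ 2 * cos x ^ 2 := by positivity
  linarith

lemma g_mono {a b p t : ℝ} (ha : 0 < a) (h0 : 0 < p) (hpt : p < t) (h1 : t < π / 2) :
    a * sin p ^ 2 - b < a * sin t ^ 2 - b := by
  have hs := Real.sin_pos_of_pos_of_lt_pi h0 (by linarith)
  have := Real.sin_lt_sin_of_lt_of_le_pi_div_two (x := p) (y := t) (by linarith) h1.le hpt
  have : sin p ^ 2 < sin t ^ 2 := by gcongr
  nlinarith

lemma KX {a b p t : ℝ} (ha : 0 < a) (hb : 0 < b) (h0 : 0 < p) (hpt : p < t) (h1 : t < π / 2)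
    (hf : 0 ≤ a * sin p ^ 2 - b) :
    t * df a b t * ff a b p < p * df a b p * ff a b t := by
  have hs := Real.sin_pos_of_pos_of_lt_pi h0 (by linarith)
  have hc := Real.cos_pos_of_mem_Ioo (x := p) ⟨by linarith, by linarith⟩
  have hs' := Real.sin_pos_of_pos_of_lt_pi (x := t) (by linarith) (by linarith)
  have hc' := Real.cos_pos_of_mem_Ioo (x := t) ⟨by linarith, by linarith⟩
  have hg := g_mono (b := b) ha h0 hpt h1
  have hgt : 0 < a * sin t ^ 2 - b := by linarith
  have hft : 0 < ff a b t := by unfold ff; positivity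
  rcases hf.eq_or_lt with h | h
  · have e1 : ff a b p = 0 := by unfold ff; rw [← h]; simp
    have e2 : 0 < df a b p := by unfold df; rw [← h]; simp; positivity
    rw [e1, mul_zero]; positivity
  · have hfp : 0 < ff a b p := by unfold ff; positivity
    have key : ∀ x, 0 < sin x → 0 < cos x → 0 < a * sin x ^ 2 - b →
        x * df a b x / ff a b x = CC (2 * x) + 2 * CC x * (1 + b / (a * sin x ^ 2 - b)) := by
      intro x h1 h2 h3
      unfold CC df ff
      rw [Real.sin_two_mul, Real.cos_two_mul']
      have h4 := h3.ne'
      generalize hG : a * sin x ^ 2 - b = g at *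
      have hb' : b = a * sin x ^ 2 - g := by linarith
      rw [hb']
      field_simp
      ring
    rw [← div_lt_div_iff₀ hft hfp, key t hs' hc' hgt, key p hs hc h]
    have c1 := CC_anti (a := 2 * p) (b := 2 * t) ⟨by linarith, by linarith⟩ ⟨by linarith, by linarith⟩ (by linarith)
    have c2 := CC_anti (a := p) (b := t) ⟨by linarith, by linarith⟩ ⟨by linarith, by linarith⟩ (by linarith)
    have c3 := CC_pos (x := t) (by linarith) h1
    have c4 : b / (a * sin t ^ 2 - b) ≤ b / (a * sin p ^ 2 - b) := by gcongr
    have c5 : 0 ≤ CC p := by linarith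
    have : 2 * CC t * (1 + b / (a * sin t ^ 2 - b)) ≤ 2 * CC p * (1 + b / (a * sin p ^ 2 - b)) := by
      gcongr
    linarith

/-- single crossing -/
lemma crossing {a b A B p t : ℝ} (ha : 0 < a) (hb : 0 < b) (h0 : 0 < p) (hpt : p < t) (h1 : t < π / 2)
    (hA : 0 ≤ A) (hAB : A < B) (hD : A * (p * df a b p) - B * ff a b p ≤ 0) :
    A * (t * df a b t) - B * ff a b t < 0 := by
  have hs := Real.sin_pos_of_pos_of_lt_pi h0 (by linarith)
  have hc := Real.cos_pos_of_mem_Ioo (x := p) ⟨by linarith, by linarith⟩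
  have hs' := Real.sin_pos_of_pos_of_lt_pi (x := t) (by linarith) (by linarith)
  have hc' := Real.cos_pos_of_mem_Ioo (x := t) ⟨by linarith, by linarith⟩
  have hg := g_mono (b := b) ha h0 hpt h1
  have hgp : 0 ≤ a * sin p ^ 2 - b := by
    by_contra! h
    have := I1_pos (b := b) ha h0 (by linarith) h.le
    have h2 : ff a b p < 0 := by
      unfold ff; exact mul_neg_of_pos_of_neg (by positivity) h
    nlinarith
  have hft : 0 < ff a b t := by
    unfold ff; have : 0 < a * sin t ^ 2 - b := by linarith
    positivity
  rcases hA.eq_or_lt with h | h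
  · subst h; nlinarith
  have hk := KX ha hb h0 hpt h1 hgp
  have hfp : 0 ≤ ff a b p := by unfold ff; positivity
  rcases hfp.eq_or_lt with h' | h'
  · exfalso
    have e2 : 0 < df a b p * (p * ff a b t) := by rw [← h'] at hk; linarith
    have e3 : 0 < df a b p := pos_of_mul_pos_left e2 (by positivity)
    rw [← h'] at hD
    have : 0 < A * (p * df a b p) := by positivity
    linarith
  · have : (A * (t * df a b t) - B * ff a b t) * ff a b p < 0 := by
      have h3 : A * (t * df a b t * ff a b p) < A * (p * df a b p * ff a b t) := by gcongr
      have h4 : (A * (p * df a b p) - B * ff a b p) * ff a b t ≤ 0 :=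
        mul_nonpos_of_nonpos_of_nonneg hD hft.le
      linarith
    by_contra! h5
    have := mul_nonneg h5 h'.le
    linarith

lemma Psi_cross {a b : ℝ} (n : ℕ) {p t : ℝ} (ha : 0 < a) (hb : 0 < b) (h0 : 0 < p) (hpt : p ≤ t) (h1 : t < π / 2)
    (hP : 0 ≤ 2 * ((n : ℝ) + 2) * hh a b p - n * (p * ff a b p)) :
    0 ≤ 2 * ((n : ℝ) + 2) * hh a b t - n * (t * ff a b t) := by
  set Ψ : ℝ → ℝ := fun x => 2 * ((n : ℝ) + 2) * hh a b x - n * (x * ff a b x) with hΨ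
  have hd : ∀ x, HasDerivAt Ψ (-(n * (x * df a b x) - (n + 4) * ff a b x)) x := by
    intro x
    refine (((hh_der a b x).const_mul (2 * ((n : ℝ) + 2))).sub
      (((hasDerivAt_id x).mul (ff_der a b x)).const_mul (n : ℝ))).congr_deriv ?_
    simp; ring
  have hcont : Continuous Ψ := continuous_iff_continuousAt.2 fun x => (hd x).continuousAt
  obtain ⟨q, hq, hq'⟩ := exists_hasDerivAt_eq_slope Ψ _ h0 hcont.continuousOn (fun x _ => hd x)
  have hΨ0 : Ψ 0 = 0 := by simp [hΨ, hh]
  have hs : 0 ≤ (Ψ p - Ψ 0) / (p - 0) := by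
    rw [hΨ0]; simp only [sub_zero]; exact div_nonneg hP h0.le
  rw [← hq'] at hs
  have hm : MonotoneOn Ψ (Set.Icc q t) := by
    apply monotoneOn_of_deriv_nonneg (convex_Icc _ _) hcont.continuousOn
    · intro x _; exact (hd x).differentiableAt.differentiableWithinAt
    · intro x hx
      rw [interior_Icc] at hx
      rw [(hd x).deriv]
      have := crossing (A := n) (B := n + 4) ha hb hq.1 hx.1 (by linarith [hx.2]) (by positivity) (by linarith) (by linarith)
      linarith
  exact hP.trans (hm ⟨hq.2.le, hpt⟩ ⟨by linarith [hq.2], le_rfl⟩ hpt)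

lemma first_zero {f : ℝ → ℝ} (hf : Continuous f) {s t : ℝ} (hst : s ≤ t) (hs : f s < 0) (ht : 0 ≤ f t) :
    ∃ r, s < r ∧ r ≤ t ∧ f r = 0 ∧ ∀ x, s ≤ x → x < r → f x < 0 := by
  set S := {x | x ∈ Set.Icc s t ∧ 0 ≤ f x} with hS
  have hcl : IsClosed S := isClosed_Icc.inter (isClosed_le continuous_const hf)
  have hne : S.Nonempty := ⟨t, ⟨hst, le_rfl⟩, ht⟩
  have hbd : BddBelow S := ⟨s, fun x hx => hx.1.1⟩
  have hm : sInf S ∈ S := hcl.csInf_mem hne hbd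
  set r := sInf S
  have hlt : ∀ x, s ≤ x → x < r → f x < 0 := by
    intro x h1 h2
    by_contra! h
    have := csInf_le hbd (show x ∈ S from ⟨⟨h1, by linarith [hm.1.2]⟩, h⟩)
    linarith
  have hsr : s < r := lt_of_le_of_ne hm.1.1 (by intro h; have := hm.2; rw [← h] at this; linarith)
  refine ⟨r, hsr, hm.1.2, le_antisymm ?_ hm.2, hlt⟩
  have : f r ∈ closure (Set.Iio 0) := by
    have h1 : r ∈ closure (Set.Ico s r) := by rw [closure_Ico hsr.ne]; exact ⟨hsr.le, le_rfl⟩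
    exact map_mem_closure hf h1 (fun x hx => hlt x hx.1 hx.2)
  rw [closure_Iio] at this
  exact this

structure Sol (n : ℕ) (a b : ℝ) (u p : ℝ → ℝ) : Prop where
  ha : 0 < a
  hb : 0 < b
  hu : ∀ r, HasDerivAt u (p r) r
  hpc : Continuous p
  hp0 : p 0 = 0
  hp : ∀ r, 0 < r → HasDerivAt p (-((n + 1) / r * p r) - ff a b (u r)) r
  pos : ∀ r, 0 ≤ r → 0 < u r
  lim : Tendsto u atTop (nhds 0)
  h0 : u 0 < π / 2

lemma smono_of {f f' : ℝ → ℝ} {s t : ℝ} (hst : s < t) (hc : ContinuousOn f (Set.Icc s t))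
    (hd : ∀ x, s < x → x < t → HasDerivAt f (f' x) x) (hpos : ∀ x, s < x → x < t → 0 < f' x) :
    f s < f t := by
  obtain ⟨c, hcm, he⟩ := exists_hasDerivAt_eq_slope f f' hst hc (fun x hx => hd x hx.1 hx.2)
  have := hpos c hcm.1 hcm.2
  rw [he] at this
  have h2 : 0 < t - s := by linarith
  have := (div_pos_iff_of_pos_right h2).1 this
  linarith

lemma mono_of {f f' : ℝ → ℝ} {s t : ℝ} (hst : s ≤ t) (hc : ContinuousOn f (Set.Icc s t))
    (hd : ∀ x, s < x → x < t → HasDerivAt f (f' x) x) (hpos : ∀ x, s < x → x < t → 0 ≤ f' x) :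
    f s ≤ f t := by
  rcases hst.eq_or_lt with h | hst
  · rw [h]
  obtain ⟨c, hcm, he⟩ := exists_hasDerivAt_eq_slope f f' hst hc (fun x hx => hd x hx.1 hx.2)
  have := hpos c hcm.1 hcm.2
  rw [he] at this
  have h2 : 0 < t - s := by linarith
  by_contra! h3
  have := div_neg_of_neg_of_pos (show f t - f s < 0 by linarith) h2
  linarith

namespace Sol
variable {n : ℕ} {a b : ℝ} {u p : ℝ → ℝ}

lemma ffc (a b : ℝ) : Continuous (ff a b) := by unfold ff; fun_prop
lemma hhc (a b : ℝ) : Continuous (hh a b) := by unfold hh; fun_prop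

lemma uc (S : Sol n a b u p) : Continuous u :=
  continuous_iff_continuousAt.2 fun x => (S.hu x).continuousAt

lemma M_der (S : Sol n a b u p) {r : ℝ} (hr : 0 < r) :
    HasDerivAt (fun r => r ^ (n + 1) * p r) (-(r ^ (n + 1) * ff a b (u r))) r := by
  refine ((hasDerivAt_pow (n + 1) r).mul (S.hp r hr)).congr_deriv ?_
  push_cast
  field_simp
  ring

lemma fu (S : Sol n a b u p) {r : ℝ} : HasDerivAt (fun r => ff a b (u r)) (df a b (u r) * p r) r :=
  (ff_der a b (u r)).comp r (S.hu r)
lemma hu' (S : Sol n a b u p) {r : ℝ} : HasDerivAt (fun r => hh a b (u r)) (ff a b (u r) * p r) r :=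
  (hh_der a b (u r)).comp r (S.hu r)

lemma E_anti (S : Sol n a b u p) {r s : ℝ} (hr : 0 ≤ r) (hrs : r ≤ s) :
    p s ^ 2 / 2 + hh a b (u s) ≤ p r ^ 2 / 2 + hh a b (u r) := by
  have hc1 := S.hpc
  have hc2 := (hhc a b).comp S.uc
  have := mono_of (f := fun r => -(p r ^ 2 / 2 + hh a b (u r))) (f' := fun r => (n + 1) / r * p r ^ 2) hrs
    (by
      apply Continuous.continuousOn
      exact ((hc1.pow 2).div_const 2 |>.add hc2).neg)
    (by
      intro x h1 h2
      have hx : 0 < x := by linarith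
      refine (((((S.hp x hx).pow 2).div_const 2).add S.hu').neg).congr_deriv ?_
      simp
      ring)
    (by
      intro x h1 h2
      have hx : 0 < x := by linarith
      positivity)
  linarith

lemma E_nonneg (S : Sol n a b u p) {r : ℝ} (hr : 0 ≤ r) : 0 ≤ p r ^ 2 / 2 + hh a b (u r) := by
  have hl : Tendsto (fun s => hh a b (u s)) atTop (nhds 0) := by
    have h := ((hhc a b).tendsto 0).comp S.lim
    have e : hh a b 0 = 0 := by simp [hh]
    rw [e] at h
    exact h
  apply le_of_tendsto hl
  filter_upwards [eventually_ge_atTop r] with s hs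
  have := S.E_anti hr hs
  nlinarith [sq_nonneg (p s)]

lemma ff_pos_of_hh (_ha : 0 < a) (hb : 0 < b) {x : ℝ} (h0 : 0 < x) (h1 : x < π / 2) (h : 0 ≤ hh a b x) :
    0 < a * sin x ^ 2 - b := by
  have hs := Real.sin_pos_of_pos_of_lt_pi h0 (by linarith)
  unfold hh at h
  have h2 : 0 ≤ sin x ^ 2 * (a * sin x ^ 2 / 4 - b / 2) := by linarith
  have h3 := nonneg_of_mul_nonneg_right h2 (by positivity)
  linarith

lemma ff_pos {x : ℝ} (h0 : 0 < x) (h1 : x < π / 2) (h : 0 < a * sin x ^ 2 - b) :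
    0 < ff a b x := by
  have hs := Real.sin_pos_of_pos_of_lt_pi h0 (by linarith)
  have hc := Real.cos_pos_of_mem_Ioo (x := x) ⟨by linarith, h1⟩
  unfold ff; positivity

lemma p_neg_aux (S : Sol n a b u p) {r : ℝ} (hr : 0 < r)
    (h : ∀ x, 0 < x → x < r → 0 < ff a b (u x)) : p r < 0 := by
  have := smono_of (f := fun r => -(r ^ (n + 1) * p r)) (f' := fun r => r ^ (n + 1) * ff a b (u r)) hr
    (by
      have := S.hpc
      apply Continuous.continuousOn
      fun_prop)
    (fun x h1 _ => ((S.M_der h1).neg).congr_deriv (by ring))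
    (fun x h1 h2 => mul_pos (by positivity) (h x h1 h2))
  simp only [S.hp0, mul_zero, neg_zero] at this
  by_contra! h
  have : 0 ≤ r ^ (n + 1) * p r := by positivity
  linarith

lemma u_anti_aux (S : Sol n a b u p) {s t : ℝ} (hst : s < t)
    (h : ∀ x, s < x → x < t → p x < 0) : u t < u s := by
  have := smono_of (f := fun r => - u r) (f' := fun r => - p r) hst
    S.uc.neg.continuousOn (fun x _ _ => (S.hu x).neg) (fun x h1 h2 => by linarith [h x h1 h2])
  linarith

lemma p_neg (S : Sol n a b u p) {r : ℝ} (hr : 0 < r) : p r < 0 := by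
  have hy : 0 < ff a b (u 0) := by
    apply ff_pos (S.pos 0 le_rfl) S.h0
    apply ff_pos_of_hh S.ha S.hb (S.pos 0 le_rfl) S.h0
    have := S.E_nonneg le_rfl
    rw [S.hp0] at this
    linarith
  have hev : ∀ᶠ x in nhds (0 : ℝ), 0 < ff a b (u x) :=
    (((ffc a b).comp S.uc).tendsto 0).eventually (lt_mem_nhds hy)
  obtain ⟨δ, hδ, hball⟩ := Metric.eventually_nhds_iff.1 hev
  have hsmall : ∀ x, 0 < x → x < δ → p x < 0 := by
    intro x h1 h2
    apply S.p_neg_aux h1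
    intro z hz1 hz2
    apply hball
    rw [Real.dist_eq, sub_zero, abs_of_pos hz1]; linarith
  by_contra! hpr
  have hδr : δ ≤ r := by
    by_contra! h
    linarith [hsmall r hr h]
  obtain ⟨r0, g1, g2, g3, g4⟩ := first_zero S.hpc (s := δ / 2) (t := r) (by linarith)
    (hsmall _ (by linarith) (by linarith)) hpr
  have hneg : ∀ x, 0 < x → x < r0 → p x < 0 := by
    intro x h1 h2
    rcases lt_or_ge x (δ / 2) with h | h
    · exact hsmall x h1 (by linarith)
    · exact g4 x h h2
  have hr0 : 0 < r0 := by linarith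
  have hu0 : u r0 < u 0 := S.u_anti_aux hr0 hneg
  have hg : 0 < a * sin (u r0) ^ 2 - b := by
    apply ff_pos_of_hh S.ha S.hb (S.pos r0 hr0.le) (by linarith [S.h0])
    have := S.E_nonneg hr0.le
    rw [g3] at this
    linarith
  have : p r0 < 0 := by
    apply S.p_neg_aux hr0
    intro x h1 h2
    have k1 : u x < u 0 := S.u_anti_aux h1 (fun z z1 z2 => hneg z z1 (by linarith))
    have k2 : u r0 < u x := S.u_anti_aux h2 (fun z z1 z2 => hneg z (by linarith) z2)
    have k3 : u x < π / 2 := by linarith [S.h0]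
    apply ff_pos (S.pos x h1.le) k3
    have := g_mono (b := b) S.ha (S.pos r0 hr0.le) k2 k3
    linarith
  linarith

lemma u_anti (S : Sol n a b u p) {s t : ℝ} (hs : 0 ≤ s) (hst : s < t) : u t < u s :=
  S.u_anti_aux hst (fun x h1 _ => S.p_neg (by linarith))

lemma u_lt (S : Sol n a b u p) {s : ℝ} (hs : 0 ≤ s) : u s < π / 2 := by
  rcases hs.eq_or_lt with h | h
  · rw [← h]; exact S.h0
  · linarith [S.u_anti le_rfl h, S.h0]

lemma M_tail (S : Sol n a b u p) : ∃ C R, 0 < C ∧ 1 ≤ R ∧ ∀ r, R ≤ r → -C ≤ r ^ (n + 1) * p r := by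
  have hev : ∀ᶠ r in atTop, a * sin (u r) ^ 2 - b < 0 := by
    have hc : Continuous (fun x => a * sin x ^ 2 - b) := by fun_prop
    have h := (hc.tendsto 0).comp S.lim
    apply h.eventually (gt_mem_nhds _)
    simp [S.hb]
  obtain ⟨R, hR⟩ := eventually_atTop.1 hev
  set R' := max R 1
  have h1 : 1 ≤ R' := le_max_right _ _
  refine ⟨-(R' ^ (n + 1) * p R'), R', ?_, h1, ?_⟩
  · have := S.p_neg (r := R') (by linarith)
    have h2 : 0 < R' ^ (n + 1) := by positivity
    nlinarith
  · intro r hr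
    rw [neg_neg]
    apply mono_of (f := fun r => (r ^ (n + 1) * p r)) (f' := fun r => -(r ^ (n + 1) * ff a b (u r))) hr
    · have := S.hpc
      apply Continuous.continuousOn
      fun_prop
    · intro x k1 k2
      exact S.M_der (by linarith)
    · intro x k1 k2
      have hx : 0 < x := by linarith
      have hu0 := S.pos x hx.le
      have hu1 := S.u_lt hx.le
      have hs := Real.sin_pos_of_pos_of_lt_pi hu0 (by linarith)
      have hc := Real.cos_pos_of_mem_Ioo (x := u x) ⟨by linarith, hu1⟩
      have hg := hR x (by linarith [le_max_left R 1])
      have : ff a b (u x) ≤ 0 := mul_nonpos_of_nonneg_of_nonpos (by positivity) hg.le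
      have h3 : 0 < x ^ (n + 1) := by positivity
      nlinarith

lemma P_der (S : Sol n a b u p) {r : ℝ} (hr : 0 < r) :
    HasDerivAt (fun r => r ^ (n + 2) * p r ^ 2 + n * r ^ (n + 1) * (u r * p r) + 2 * r ^ (n + 2) * hh a b (u r))
      (r ^ (n + 1) * (2 * ((n : ℝ) + 2) * hh a b (u r) - n * (u r * ff a b (u r)))) r := by
  have hp := S.hp r hr
  have hu := S.hu r
  refine ((((hasDerivAt_pow (n + 2) r).mul (hp.pow 2)).add
    (((hasDerivAt_pow (n + 1) r).const_mul (n : ℝ)).mul (hu.mul hp))).add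
    (((hasDerivAt_pow (n + 2) r).const_mul 2).mul S.hu')).congr_deriv ?_
  push_cast
  simp only [Pi.pow_apply, Pi.mul_apply]
  field_simp
  ring

lemma P_nonneg (S : Sol n a b u p) {r : ℝ} (hr : 0 < r) :
    0 ≤ r ^ (n + 2) * p r ^ 2 + n * r ^ (n + 1) * (u r * p r) + 2 * r ^ (n + 2) * hh a b (u r) := by
  have hcont : Continuous (fun r => r ^ (n + 2) * p r ^ 2 + n * r ^ (n + 1) * (u r * p r) + 2 * r ^ (n + 2) * hh a b (u r)) := by
    have := S.hpc
    have := S.uc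
    have := hhc a b
    fun_prop
  rcases le_or_gt 0 (2 * ((n : ℝ) + 2) * hh a b (u r) - n * (u r * ff a b (u r))) with h | h
  · have := mono_of hr.le hcont.continuousOn (fun x h1 _ => S.P_der h1) (by
      intro x h1 h2
      apply mul_nonneg (by positivity)
      exact Psi_cross n S.ha S.hb (S.pos r hr.le) (S.u_anti h1.le h2).le (S.u_lt h1.le) h)
    simpa [S.hp0] using this
  · obtain ⟨C, R, hC, hR, hM⟩ := S.M_tail
    have hl : Tendsto (fun s => -(n * C) * u s) atTop (nhds 0) := by
      simpa using S.lim.const_mul (-(n * C))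
    apply le_of_tendsto hl
    filter_upwards [eventually_ge_atTop r, eventually_ge_atTop R] with s hs hs'
    have hs0 : 0 < s := by linarith
    have := mono_of hs hcont.neg.continuousOn (fun x h1 _ => (S.P_der (by linarith)).neg) (by
      intro x h1 h2
      have hx : 0 < x := by linarith
      have h3 : 2 * ((n : ℝ) + 2) * hh a b (u x) - n * (u x * ff a b (u x)) < 0 := by
        by_contra! h4
        have := Psi_cross n S.ha S.hb (S.pos x hx.le) (S.u_anti hr.le h1).le (S.u_lt hr.le) h4
        linarith
      have : 0 < x ^ (n + 1) := by positivity
      nlinarith)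
    have hE := S.E_nonneg hs0.le
    have h5 : 0 ≤ s ^ (n + 2) * (p s ^ 2 / 2 + hh a b (u s)) := by positivity
    have h6 : 0 ≤ n * u s * (s ^ (n + 1) * p s + C) := by
      apply mul_nonneg
      · have := S.pos s hs0.le
        positivity
      · linarith [hM s hs']
    simp only [Pi.neg_apply] at this
    linarith

end Sol

structure Lin (n : ℕ) (a b : ℝ) (u p v q : ℝ → ℝ) : Prop extends Sol n a b u p where
  hv : ∀ r, HasDerivAt v (q r) r
  hqc : Continuous q
  hq0 : q 0 = 0
  hv0 : v 0 = 1
  hq : ∀ r, 0 < r → HasDerivAt q (-((n + 1) / r * q r) - df a b (u r) * v r) r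

namespace Lin
variable {n : ℕ} {a b : ℝ} {u p v q : ℝ → ℝ}

lemma vc (L : Lin n a b u p v q) : Continuous v :=
  continuous_iff_continuousAt.2 fun x => (L.hv x).continuousAt

def Wt (n : ℕ) (a b : ℝ) (u p v q : ℝ → ℝ) (r : ℝ) : ℝ :=
  r ^ (n + 1) * (p r * q r + v r * ff a b (u r)) + (n + 1) * r ^ n * (v r * p r)

lemma pow_der (n : ℕ) {r : ℝ} (hr : 0 < r) : HasDerivAt (fun r : ℝ => r ^ n) (n * r ^ n / r) r := by
  refine (hasDerivAt_pow n r).congr_deriv ?_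
  cases n with
  | zero => simp
  | succ m => simp; field_simp; ring

lemma Wt_der (L : Lin n a b u p v q) {r : ℝ} (hr : 0 < r) :
    HasDerivAt (Wt n a b u p v q) (-((n + 1) * r ^ n / r * (v r * p r))) r := by
  have hp := L.hp r hr
  have hv := L.hv r
  have hq := L.hq r hr
  unfold Wt
  refine (((hasDerivAt_pow (n + 1) r).mul ((hp.mul hq).add (hv.mul L.toSol.fu))).add
    (((pow_der n hr).const_mul ((n : ℝ) + 1)).mul (hv.mul hp))).congr_deriv ?_
  push_cast
  simp only [Pi.add_apply, Pi.mul_apply]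
  field_simp
  ring

lemma Wt_cont (L : Lin n a b u p v q) : Continuous (Wt n a b u p v q) := by
  have := L.hpc
  have := L.toSol.uc
  have := L.vc
  have := L.hqc
  have := Sol.ffc a b
  unfold Wt
  fun_prop

lemma Wt_mono (L : Lin n a b u p v q) {s t : ℝ} (hs : 0 ≤ s) (hst : s < t)
    (h : ∀ x, s < x → x < t → 0 < v x) : Wt n a b u p v q s < Wt n a b u p v q t := by
  apply smono_of hst L.Wt_cont.continuousOn (fun x h1 _ => L.Wt_der (by linarith))
  intro x h1 h2
  have hx : 0 < x := by linarith
  have := L.toSol.p_neg hx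
  have h3 : 0 < v x * (-p x) := mul_pos (h x h1 h2) (by linarith)
  have h4 : 0 < (n + 1) * x ^ n / x * (v x * (-p x)) := by positivity
  linarith

lemma Wt_pos (L : Lin n a b u p v q) {t : ℝ} (ht : 0 < t)
    (h : ∀ x, 0 < x → x < t → 0 < v x) : 0 < Wt n a b u p v q t := by
  have := L.Wt_mono le_rfl ht h
  simpa [Wt, L.hp0] using this

lemma exists_nonpos (L : Lin n a b u p v q) : ∃ t, 0 < t ∧ v t ≤ 0 := by
  by_contra! hpos
  obtain ⟨C, R, hC, hR, hM⟩ := L.toSol.M_tail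
  have hδ := L.Wt_pos one_pos (fun x h _ => hpos x h)
  set δ := Wt n a b u p v q 1 with hδd
  set k := δ / (C * C) with hk
  have hk0 : 0 < k := by positivity
  have key : ∀ t, R ≤ t → v R / p R - k * R ≤ v t / p t - k * t := by
    intro t ht
    have hd : ∀ x, R ≤ x → HasDerivAt (fun r => v r / p r - k * r)
        (Wt n a b u p v q x / (x ^ (n + 1) * p x ^ 2) - k) x := by
      intro x hx
      have hx0 : 0 < x := by linarith
      have hpx := L.toSol.p_neg hx0
      refine (((L.hv x).div (L.hp x hx0) hpx.ne).sub ((hasDerivAt_id x).const_mul k)).congr_deriv ?_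
      unfold Wt
      have := hpx.ne
      field_simp
      ring
    apply mono_of (f := fun r => v r / p r - k * r) ht
      (fun x hx => (hd x hx.1).continuousAt.continuousWithinAt) (fun x h1 _ => hd x h1.le)
    intro x h1 h2
    have hx0 : 0 < x := by linarith
    have hpx := L.toSol.p_neg hx0
    have hW : δ ≤ Wt n a b u p v q x :=
      (L.Wt_mono zero_le_one (by linarith) (fun z hz _ => hpos z (by linarith))).le
    have hMx := hM x h1.le
    have hx1 : 1 ≤ x ^ (n + 1) := one_le_pow₀ (by linarith)
    have h3 : x ^ (n + 1) * p x ^ 2 ≤ C * C := by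
      have e1 : x ^ (n + 1) * (- p x) ≤ C := by linarith
      have e2 : - p x ≤ C := by nlinarith
      calc x ^ (n + 1) * p x ^ 2 = (x ^ (n + 1) * (- p x)) * (- p x) := by ring
        _ ≤ C * C := by
          apply mul_le_mul e1 e2 (by linarith) hC.le
    have h4 : 0 < x ^ (n + 1) * p x ^ 2 := by
      have := hpx.ne
      positivity
    have : k ≤ Wt n a b u p v q x / (x ^ (n + 1) * p x ^ 2) := by
      rw [hk]; exact div_le_div₀ (by linarith) hW h4 h3
    linarith
  have hvp : v R / p R < 0 := div_neg_of_pos_of_neg (hpos R (by linarith)) (L.toSol.p_neg (by linarith))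
  set t := R - (v R / p R) / k with htd
  have htR : R < t := by
    have := div_neg_of_neg_of_pos hvp hk0
    linarith
  have h1 := key t htR.le
  have h2 : v t / p t < 0 := div_neg_of_pos_of_neg (hpos t (by linarith)) (L.toSol.p_neg (by linarith))
  have h3 : k * t = k * R - v R / p R := by rw [htd]; field_simp
  linarith

def WW (n : ℕ) (a b c : ℝ) (u p v q : ℝ → ℝ) (r : ℝ) : ℝ :=
  r ^ (n + 1) * ((r * p r + c * u r) * q r - v r * ((c - n) * p r - r * ff a b (u r)))

lemma w_der (S : Sol n a b u p) (c : ℝ) {r : ℝ} (hr : 0 < r) :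
    HasDerivAt (fun r => r * p r + c * u r) ((c - n) * p r - r * ff a b (u r)) r := by
  refine (((hasDerivAt_id r).mul (S.hp r hr)).add ((S.hu r).const_mul c)).congr_deriv ?_
  simp only [id]
  field_simp
  ring

lemma WW_der (L : Lin n a b u p v q) (c : ℝ) {r : ℝ} (hr : 0 < r) :
    HasDerivAt (WW n a b c u p v q) (-(r ^ (n + 1) * v r * (c * (u r * df a b (u r)) - (c + 2) * ff a b (u r)))) r := by
  have hp := L.hp r hr
  have hv := L.hv r
  have hq := L.hq r hr
  unfold WW
  refine ((hasDerivAt_pow (n + 1) r).mul (((w_der L.toSol c hr).mul hq).sub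
    (hv.mul ((hp.const_mul (c - n)).sub ((hasDerivAt_id r).mul L.toSol.fu))))).congr_deriv ?_
  push_cast
  simp only [Pi.sub_apply, Pi.mul_apply, id]
  field_simp
  ring

lemma WW_cont (L : Lin n a b u p v q) (c : ℝ) : Continuous (WW n a b c u p v q) := by
  have := L.hpc
  have := L.toSol.uc
  have := L.vc
  have := L.hqc
  have := Sol.ffc a b
  unfold WW
  fun_prop

lemma Q_nonneg (ha : 0 < a) {c x : ℝ} (hc : 0 < c) (h0 : 0 < x) (h1 : x < π / 2)
    (hD : ∀ z, 0 < z → z < x → 0 < c * (z * df a b z) - (c + 2) * ff a b z) :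
    0 ≤ x * ff a b x - 2 * hh a b x := by
  have := mono_of (f := fun x => x * ff a b x - 2 * hh a b x) (f' := fun x => x * df a b x - ff a b x) h0.le
    (by
      have := Sol.ffc a b
      have := Sol.hhc a b
      apply Continuous.continuousOn
      fun_prop)
    (by
      intro z _ _
      refine (((hasDerivAt_id z).mul (ff_der a b z)).sub ((hh_der a b z).const_mul 2)).congr_deriv ?_
      simp only [id]
      ring)
    (by
      intro z z0 z1
      rcases le_or_gt (a * sin z ^ 2 - b) 0 with h | h
      · exact (I1_pos ha z0 (by linarith) h).le
      · have h2 := Sol.ff_pos z0 (by linarith) h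
        have h3 := hD z z0 z1
        have h4 : 0 < c * (z * df a b z - ff a b z) := by linarith
        exact (pos_of_mul_pos_right h4 hc.le).le)
  simpa [ff, hh] using this

lemma main (L : Lin n a b u p v q) : ∃! r : ℝ, 0 < r ∧ v r = 0 := by
  have S := L.toSol
  obtain ⟨t, ht0, ht⟩ := L.exists_nonpos
  obtain ⟨r1, g1, -, g3, g4⟩ := first_zero L.vc.neg (s := 0) (t := t) ht0.le
    (by simp [L.hv0]) (by simp only [Pi.neg_apply]; linarith)
  simp only [Pi.neg_apply] at g3 g4
  have hv1 : v r1 = 0 := by linarith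
  have hvpos : ∀ x, 0 < x → x < r1 → 0 < v x := fun x h1 h2 => by linarith [g4 x h1.le h2]
  have hp1 := S.p_neg g1
  have hu1 := S.pos r1 g1.le
  have hq1 : q r1 < 0 := by
    have := L.Wt_pos g1 hvpos
    unfold Wt at this
    rw [hv1] at this
    by_contra! h
    have h2 : 0 ≤ r1 ^ (n + 1) * (- p r1 * q r1) := by
      have : 0 ≤ - p r1 := by linarith
      positivity
    linarith
  refine ⟨r1, ⟨g1, hv1⟩, ?_⟩
  rintro s ⟨hs0, hs⟩
  by_contra hne
  have hlt : r1 < s := by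
    rcases lt_or_gt_of_ne hne with h | h
    · linarith [hvpos s hs0 h]
    · exact h
  -- negativity right after r1
  obtain ⟨ε, hε, hεs, hneg⟩ : ∃ ε > 0, r1 + ε < s ∧ ∀ x, r1 < x → x ≤ r1 + ε → v x < 0 := by
    have h1 : ∀ᶠ x in nhds r1, q x < 0 := (L.hqc.tendsto r1).eventually (gt_mem_nhds hq1)
    obtain ⟨δ, hδ, hball⟩ := Metric.eventually_nhds_iff.1 h1
    refine ⟨min (δ / 2) ((s - r1) / 2), by apply lt_min <;> linarith, ?_, ?_⟩
    · linarith [min_le_right (δ / 2) ((s - r1) / 2)]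
    · intro x h1 h2
      have h3 := min_le_left (δ / 2) ((s - r1) / 2)
      have := smono_of (f := fun x => - v x) (f' := fun x => - q x) h1 L.vc.neg.continuousOn
        (fun z _ _ => (L.hv z).neg) (by
          intro z z1 z2
          have := hball (y := z) (by rw [Real.dist_eq, abs_of_pos (by linarith)]; linarith)
          linarith)
      linarith
  obtain ⟨r2, k1, -, k3, k4⟩ := first_zero L.vc (s := r1 + ε) (t := s) hεs.le
    (hneg _ (by linarith) le_rfl) hs.ge
  have h12 : r1 < r2 := by linarith
  have hr2 : 0 < r2 := by linarith
  have hvneg : ∀ x, r1 < x → x < r2 → v x < 0 := by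
    intro x h1 h2
    rcases le_or_gt x (r1 + ε) with h | h
    · exact hneg x h1 h
    · exact k4 x h.le h2
  have hq2 : 0 ≤ q r2 := by
    by_contra! hq2
    have h1 : ∀ᶠ x in nhds r2, q x < 0 := (L.hqc.tendsto r2).eventually (gt_mem_nhds hq2)
    obtain ⟨δ, hδ, hball⟩ := Metric.eventually_nhds_iff.1 h1
    have h5 : max (r2 - δ / 2) ((r1 + r2) / 2) < r2 := by apply max_lt <;> linarith
    have h6 := le_max_left (r2 - δ / 2) ((r1 + r2) / 2)
    have h7 := le_max_right (r2 - δ / 2) ((r1 + r2) / 2)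
    have := smono_of (f := fun x => - v x) (f' := fun x => - q x) h5 L.vc.neg.continuousOn
        (fun z _ _ => (L.hv z).neg) (by
          intro z z1 z2
          have := hball (y := z) (by rw [Real.dist_eq, abs_of_neg (by linarith)]; linarith)
          linarith)
    have := hvneg _ (by linarith) h5
    linarith
  -- the comparison function
  set c := -(r1 * p r1) / u r1 with hc
  have hc0 : 0 < c := div_pos (by nlinarith) hu1
  have hw1 : r1 * p r1 + c * u r1 = 0 := by rw [hc]; field_simp; ring
  have hW1 : WW n a b c u p v q r1 = 0 := by unfold WW; rw [hw1, hv1]; ring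
  have hW0 : WW n a b c u p v q 0 = 0 := by unfold WW; simp
  rcases le_or_gt (c * (u r1 * df a b (u r1)) - (c + 2) * ff a b (u r1)) 0 with hD | hD
  · have := smono_of g1 (L.WW_cont c).continuousOn (fun x h1 _ => L.WW_der c h1) (by
      intro x h1 h2
      have := crossing S.ha S.hb hu1 (S.u_anti h1.le h2) (S.u_lt h1.le) hc0.le (by linarith) hD
      have h3 := hvpos x h1 h2
      have h4 : 0 < x ^ (n + 1) * v x := by positivity
      nlinarith)
    linarith
  · have hDz : ∀ z, 0 < z → z < u r1 → 0 < c * (z * df a b z) - (c + 2) * ff a b z := by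
      intro z z0 z1
      by_contra! h
      have := crossing S.ha S.hb z0 z1 (S.u_lt g1.le) hc0.le (by linarith) h
      linarith
    have hWpos := smono_of h12 (L.WW_cont c).continuousOn (fun x h1 _ => L.WW_der c (by linarith)) (by
      intro x h1 h2
      have hx : 0 < x := by linarith
      have h5 := hDz (u x) (S.pos x hx.le) (S.u_anti g1.le h1)
      have h3 := hvneg x h1 h2
      have h4 : 0 < x ^ (n + 1) * (- v x) := mul_pos (by positivity) (by linarith)
      nlinarith)
    rw [hW1] at hWpos
    have hw2 : r2 * p r2 + c * u r2 ≤ 0 := by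
      have := mono_of (f := fun r => -((r * p r + c * u r) / u r))
        (f' := fun r => -((((c - n) * p r - r * ff a b (u r)) * u r - (r * p r + c * u r) * p r) / u r ^ 2)) h12.le
        (by
          have := S.hpc
          have := S.uc
          apply ContinuousOn.neg
          apply ContinuousOn.div
          · apply Continuous.continuousOn; fun_prop
          · exact S.uc.continuousOn
          · intro x hx; exact (S.pos x (by linarith [hx.1])).ne')
        (by
          intro x h1 h2
          have hx : 0 < x := by linarith
          exact ((w_der S c hx).div (S.hu x) (S.pos x hx.le).ne').neg)
        (by
          intro x h1 h2
          have hx : 0 < x := by linarith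
          have hux := S.pos x hx.le
          have hP := S.P_nonneg hx
          have hQ := Q_nonneg S.ha hc0 hux (S.u_lt hx.le) (fun z z0 z1 =>
            hDz z z0 (by linarith [S.u_anti g1.le h1]))
          have hxp : 0 < x ^ (n + 1) := by positivity
          have hG : 0 ≤ x ^ (n + 1) * (x * p x ^ 2 + n * (u x * p x) + x * (u x * ff a b (u x))) := by
            have : 0 ≤ x ^ (n + 2) * (u x * ff a b (u x) - 2 * hh a b (u x)) := by positivity
            have e : x ^ (n + 1) * (x * p x ^ 2 + n * (u x * p x) + x * (u x * ff a b (u x))) =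
              (x ^ (n + 2) * p x ^ 2 + n * x ^ (n + 1) * (u x * p x) + 2 * x ^ (n + 2) * hh a b (u x)) +
              x ^ (n + 2) * (u x * ff a b (u x) - 2 * hh a b (u x)) := by ring
            rw [e]; linarith
          have hG' := nonneg_of_mul_nonneg_right hG hxp
          rw [← neg_div]
          apply div_nonneg _ (by positivity)
          linarith)
      simp only [hw1, zero_div, neg_zero] at this
      have hu2 := S.pos r2 hr2.le
      by_contra! h
      have := div_pos h hu2
      linarith
    unfold WW at hWpos
    rw [k3] at hWpos
    have : (r2 * p r2 + c * u r2) * q r2 ≤ 0 := mul_nonpos_of_nonpos_of_nonneg hw2 hq2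
    have : 0 < r2 ^ (n + 1) := by positivity
    nlinarith

end Lin

theorem linearized_solution_vanishes_once (d : ℕ) (hd : 2 ≤ d) (a b : ℝ)
    (hb : 0 < b) (hab : 2 * b < a)
    (u : ℝ → ℝ → ℝ) (hfam : IsShootingFamily d a b u)
    (y : ℝ) (hy : y ∈ Szero u)
    (v : ℝ → ℝ) (hv : IsLinearizedSol d a b (u y) v) :
    ∃! r : ℝ, 0 < r ∧ v r = 0 := by
  obtain ⟨n, rfl⟩ : ∃ n, d = n + 2 := ⟨d - 2, by omega⟩
  obtain ⟨hyI, hpos, hlim⟩ := hy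
  obtain ⟨⟨hu2, hu0, hode⟩, huy⟩ := hfam y hyI
  obtain ⟨hv2, hv0, hv0', hvode⟩ := hv
  have ha : 0 < a := by linarith
  have hF : Fnl a b = ff a b := by
    funext x
    unfold Fnl ff
    rw [Real.sin_two_mul]
    field_simp
  have hu1 : ContDiff ℝ 1 (deriv (u y)) := ((contDiff_succ_iff_deriv (n := 1)).1 hu2).2.2
  have hv1 : ContDiff ℝ 1 (deriv v) := ((contDiff_succ_iff_deriv (n := 1)).1 hv2).2.2
  have L : Lin n a b (u y) (deriv (u y)) v (deriv v) :=
    { ha := ha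
      hb := hb
      hu := fun r => (hu2.differentiable (by norm_num) r).hasDerivAt
      hpc := hu1.continuous
      hp0 := hu0
      hp := fun r hr => by
        refine (hu1.differentiable (by norm_num) r).hasDerivAt.congr_deriv ?_
        have := hode r hr
        rw [hF] at this
        push_cast at this
        rw [show (n : ℝ) + 2 - 1 = n + 1 by ring] at this
        linarith
      pos := hpos
      lim := hlim
      h0 := by rw [huy]; exact hyI.2
      hv := fun r => (hv2.differentiable (by norm_num) r).hasDerivAt
      hqc := hv1.continuous
      hq0 := hv0'
      hv0 := hv0
      hq := fun r hr => by
        refine (hv1.differentiable (by norm_num) r).hasDerivAt.congr_deriv ?_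
        have := hvode r hr
        rw [hF, (ff_der a b (u y r)).deriv] at this
        push_cast at this
        rw [show (n : ℝ) + 2 - 1 = n + 1 by ring] at this
        linarith }
  exact L.main
end
end
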